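/- Let B ≥ 0, κ > 0, and D > 0 be real numbers, and for R > 0 define b(R) = B + κ/R and c(R) = D/R. Define the low-frequency branch ω1²(R) = (b(R) − √(b(R)² − 4·c(R)))/2. Then ω1²(R) tends to D/κ as R tends to 0 from the right. (Interpretation: as the jerk penalty vanishes, one oscillatory frequency of the optimal pulse-and-glide solution approaches a finite constant value.) -/

import Mathlib

open Filter

/-!
Multiplying `b(R)` by `R` clears the poles: with `p = B R + κ` and `q = p² - 4 D R`, the branch is
`(p - √q) / (2R)`. Since `q → κ² > 0`, eventually `(√q)² = q`, so rationalizing the numerator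
gives `2 D / (p + √q)`. This expression is continuous at `R = 0`, where its value is
`2 D / (κ + √κ²) = D / κ`.
-/

/-- As the jerk penalty `R` vanishes, the low-frequency branch
`ω1²(R) = (b(R) − √(b(R)² − 4·c(R)))/2`, with `b(R) = B + κ/R` and `c(R) = D/R`,
tends to the finite value `D/κ`: one oscillatory frequency of the optimal
pulse-and-glide solution approaches a constant. -/
theorem low_frequency_branch_limit
    (B κ D : ℝ) (hB : 0 ≤ B) (hκ : 0 < κ) (hD : 0 < D) :
    Tendsto
      (fun R : ℝ =>
        ((B + κ / R) - Real.sqrt ((B + κ / R) ^ 2 - 4 * (D / R))) / 2)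
      (nhdsWithin 0 (Set.Ioi 0)) (nhds (D / κ)) := by
  have hq : Continuous fun R : ℝ => (B * R + κ) ^ 2 - 4 * D * R := by fun_prop
  have hlim : Tendsto
      (fun R : ℝ => 2 * D / ((B * R + κ) + Real.sqrt ((B * R + κ) ^ 2 - 4 * D * R)))
      (nhdsWithin 0 (Set.Ioi 0)) (nhds (D / κ)) := by
    have hs : Real.sqrt ((B * 0 + κ) ^ 2 - 4 * D * 0) = κ := by
      simpa using Real.sqrt_sq hκ.le
    have hcont : ContinuousAt
        (fun R : ℝ => 2 * D / ((B * R + κ) + Real.sqrt ((B * R + κ) ^ 2 - 4 * D * R))) 0 := by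
      refine ContinuousAt.div (by fun_prop) (by fun_prop) ?_
      rw [hs]
      linarith
    have hval : 2 * D / ((B * 0 + κ) + Real.sqrt ((B * 0 + κ) ^ 2 - 4 * D * 0)) = D / κ := by
      rw [hs]
      field_simp
      ring
    have h := hcont.tendsto
    rw [hval] at h
    exact h.mono_left nhdsWithin_le_nhds
  refine hlim.congr' ?_
  have hpos : ∀ᶠ R : ℝ in nhdsWithin 0 (Set.Ioi 0), 0 < (B * R + κ) ^ 2 - 4 * D * R := by
    refine nhdsWithin_le_nhds (hq.continuousAt.eventually (lt_mem_nhds ?_))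
    simpa using pow_pos hκ 2
  filter_upwards [hpos, self_mem_nhdsWithin] with R hqR hR
  have hR : 0 < R := hR
  have hsqrt : Real.sqrt ((B + κ / R) ^ 2 - 4 * (D / R))
      = Real.sqrt ((B * R + κ) ^ 2 - 4 * D * R) / R := by
    rw [show (B + κ / R) ^ 2 - 4 * (D / R) = ((B * R + κ) ^ 2 - 4 * D * R) / R ^ 2 by
      field_simp, Real.sqrt_div hqR.le, Real.sqrt_sq hR.le]
  rw [hsqrt]
  have hsq := Real.sq_sqrt hqR.le
  have hs0 := Real.sqrt_nonneg ((B * R + κ) ^ 2 - 4 * D * R)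
  generalize Real.sqrt ((B * R + κ) ^ 2 - 4 * D * R) = s at *
  have hden : 0 < B * R + κ + s := by positivity
  have hb : B + κ / R = (B * R + κ) / R := by field_simp
  rw [hb, ← sub_div, div_div, div_eq_div_iff hden.ne' (by positivity)]
  linear_combination hsq
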